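/- In the single-parameter environment with reserve prices and the payment rule of Algorithm 3, an agent whose true value is below her reserve cannot profit from overbidding: fix the other agents' bids b_{−i} and the reserves r, and suppose v_i < r_i. Then for any bid b_i ≥ r_i and any welfare-maximizing choices of the outcomes ω (for bids (b_i, b_{−i})) and ω' (for bids (r_i, b_{−i})), agent i's utility v_i · x_i(ω) − p_i is at most 0. -/

import Mathlib

open Finset

/-- The welfare of outcome `ω` for bid profile `b` with reserves `r`: the sum of `b j * x j ω`
over the accepted agents, i.e. those with `b j ≥ r j`. -/
noncomputable def welfare {Ω : Type*} [Fintype Ω] {n : ℕ}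
    (x : Fin n → Ω → ℝ) (r b : Fin n → ℝ) (ω : Ω) : ℝ :=
  ∑ j, if r j ≤ b j then b j * x j ω else 0

/-- The payment charged by Algorithm 3 to an accepted agent `i`, where `ω` is the selected
welfare-maximizing outcome for the submitted bids `b` and `ω'` is a welfare-maximizing outcome
for the profile in which `b i` is replaced by the reserve `r i`:
`p_i = Σ_{j ∈ B', j ≠ i} b j x j ω' − Σ_{j ∈ B', j ≠ i} b j x j ω + r i · x i ω'`. -/
noncomputable def payment {Ω : Type*} [Fintype Ω] {n : ℕ}
    (x : Fin n → Ω → ℝ) (r b : Fin n → ℝ) (i : Fin n) (ω ω' : Ω) : ℝ :=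
  (∑ j, if j ≠ i ∧ r j ≤ b j then b j * x j ω' else 0)
    - (∑ j, if j ≠ i ∧ r j ≤ b j then b j * x j ω else 0)
    + r i * x i ω'

/-- The utility of agent `i` with true per-unit value `vi` when she bids `β` (the other bids
being `b`), `ω` is the selected outcome for the resulting profile and `ω'` the outcome used in
the payment rule: `vi * x i ω − p_i` if she is accepted (`β ≥ r i`), and `0` otherwise. -/
noncomputable def utility {Ω : Type*} [Fintype Ω] {n : ℕ}
    (x : Fin n → Ω → ℝ) (r : Fin n → ℝ) (vi : ℝ) (i : Fin n) (b : Fin n → ℝ) (β : ℝ)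
    (ω ω' : Ω) : ℝ :=
  if r i ≤ β then vi * x i ω - payment x r (Function.update b i β) i ω ω' else 0

/-- The welfare when an accepted agent `i` bids `β` splits into the welfare of the other accepted
agents, which does not depend on `β`, and the contribution `β * x i ω` of agent `i`. -/
lemma welfare_update_eq {Ω : Type*} [Fintype Ω] {n : ℕ}
    (x : Fin n → Ω → ℝ) (r b : Fin n → ℝ) (i : Fin n) {β : ℝ} (hβ : r i ≤ β) (γ : ℝ) (ω : Ω) :
    welfare x r (Function.update b i β) ω =
      (∑ j, if j ≠ i ∧ r j ≤ Function.update b i γ j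
        then Function.update b i γ j * x j ω else 0) + β * x i ω := by
  have hsingle : β * x i ω = ∑ j, if j = i then β * x i ω else 0 := by simp
  rw [welfare, hsingle, ← Finset.sum_add_distrib]
  refine Finset.sum_congr rfl fun j _ => ?_
  by_cases hj : j = i
  · subst hj
    simp [hβ]
  · simp [hj]

/-- **No profitable overbidding below reserve** under the payment rule of Algorithm 3: if
agent `i`'s true value satisfies `vi < r i`, then for any bid `bi ≥ r i` and any
welfare-maximizing outcomes `ω` (for the profile `(bi, b₋ᵢ)`) and `ω'` (for the profile
`(r i, b₋ᵢ)`), her utility `vi * x i ω − p_i` is at most `0`. -/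
theorem no_profit_from_overbidding {Ω : Type*} [Fintype Ω] [Nonempty Ω] {n : ℕ}
    (x : Fin n → Ω → ℝ) (hx : ∀ i ω, 0 ≤ x i ω)
    (r b : Fin n → ℝ) (i : Fin n) (vi bi : ℝ)
    (hvi : vi < r i) (hbi : r i ≤ bi)
    (ω ω' : Ω)
    (hω : ∀ ω₀, welfare x r (Function.update b i bi) ω₀
            ≤ welfare x r (Function.update b i bi) ω)
    (hω' : ∀ ω₀, welfare x r (Function.update b i (r i)) ω₀
            ≤ welfare x r (Function.update b i (r i)) ω') :
    vi * x i ω - payment x r (Function.update b i bi) i ω ω' ≤ 0 := by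
  have hmax := hω' ω
  rw [welfare_update_eq x r b i le_rfl bi, welfare_update_eq x r b i le_rfl bi] at hmax
  have hval : vi * x i ω ≤ r i * x i ω := mul_le_mul_of_nonneg_right hvi.le (hx i ω)
  rw [payment]
  linarith
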